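/- Let G be a simple graph on a vertex type V, w : V → V → ℝ≥0∞ an edge-weight function, and u, v, x vertices. Define the weighted shortest distance d_w as the infimum of weighted walk lengths. If every walk from u to v in G passes through x (i.e., x lies in the support of every walk p : G.Walk u v), then d_w(u,v) = d_w(u,x) + d_w(x,v). -/

import Mathlib

open scoped ENNReal

/-- The weighted length of a walk: the sum over its darts of the weight of the
dart's ordered pair of endpoints. -/
noncomputable def walkWeight {V : Type*} {G : SimpleGraph V} (w : V → V → ℝ≥0∞)
    {u v : V} (p : G.Walk u v) : ℝ≥0∞ :=
  (p.darts.map fun d => w d.fst d.snd).sum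

/-- The weighted shortest distance: the infimum of the weighted lengths of all
walks from `u` to `v` (equal to `∞` when there is no such walk). -/
noncomputable def wdist {V : Type*} (G : SimpleGraph V) (w : V → V → ℝ≥0∞)
    (u v : V) : ℝ≥0∞ :=
  ⨅ p : G.Walk u v, walkWeight w p

section

variable {V : Type*} {G : SimpleGraph V} (w : V → V → ℝ≥0∞) {u v x : V}

theorem walkWeight_append (p : G.Walk u x) (q : G.Walk x v) :
    walkWeight w (p.append q) = walkWeight w p + walkWeight w q := by
  simp only [walkWeight, SimpleGraph.Walk.darts_append, List.map_append, List.sum_append]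

theorem wdist_le_walkWeight (p : G.Walk u v) : wdist G w u v ≤ walkWeight w p :=
  iInf_le _ p

variable (G u v x) in
theorem wdist_triangle : wdist G w u v ≤ wdist G w u x + wdist G w x v :=
  ENNReal.le_iInf_add_iInf fun p q =>
    (wdist_le_walkWeight w (p.append q)).trans_eq (walkWeight_append w p q)

theorem wdist_add_wdist_le_walkWeight_of_mem_support
    {p : G.Walk u v} (hx : x ∈ p.support) :
    wdist G w u x + wdist G w x v ≤ walkWeight w p := by
  classical
  calc
    wdist G w u x + wdist G w x v
        ≤ walkWeight w (p.takeUntil x hx) + walkWeight w (p.dropUntil x hx) :=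
      add_le_add (wdist_le_walkWeight w _) (wdist_le_walkWeight w _)
    _ = walkWeight w p := by rw [← walkWeight_append, p.take_spec hx]

end

theorem wdist_cut_vertex {V : Type*} (G : SimpleGraph V) (w : V → V → ℝ≥0∞)
    (u v x : V) (hx : ∀ p : G.Walk u v, x ∈ p.support) :
    wdist G w u v = wdist G w u x + wdist G w x v :=
  le_antisymm (wdist_triangle G w u v x)
    (le_iInf fun p => wdist_add_wdist_le_walkWeight_of_mem_support w (hx p))
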